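/- Monotonicity of the quenched pressure in the bond set: if B' ⊆ B are two bond sets on the same finite site set V and x > 0, then the quenched pressure with all parameters equal to x satisfies P_{B'} ≤ P_B. -/

import Mathlib

open MeasureTheory ProbabilityTheory Filter

noncomputable section

/-- The real value ±1 of a Boolean spin. -/
def spin (s : Bool) : ℝ := if s then 1 else -1

/-- The bond spin `S_b = S_n S_{n'}` for a bond `b` with endpoints `ep b = (n, n')`. -/
def bondSpin {V ι : Type*} (ep : ι → V × V) (S : V → Bool) (b : ι) : ℝ :=
  spin (S (ep b).1) * spin (S (ep b).2)

/-- The potential `U(j, S) = Σ_b x_b j_b S_b`. -/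
def potential {V ι : Type*} [Fintype ι] (ep : ι → V × V) (x j : ι → ℝ)
    (S : V → Bool) : ℝ :=
  ∑ b, x b * j b * bondSpin ep S b

/-- The partition function `Z(j) = Σ_S exp U(j,S)`. -/
def partitionFn {V ι : Type*} [Fintype V] [DecidableEq V] [Fintype ι]
    (ep : ι → V × V) (x j : ι → ℝ) : ℝ :=
  ∑ S : V → Bool, Real.exp (potential ep x j S)

/-- The Boltzmann–Gibbs expectation `⟨f⟩` at fixed disorder `j`. -/
def gibbs {V ι : Type*} [Fintype V] [DecidableEq V] [Fintype ι]
    (ep : ι → V × V) (x j : ι → ℝ) (f : (V → Bool) → ℝ) : ℝ :=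
  (∑ S : V → Bool, f S * Real.exp (potential ep x j S)) / partitionFn ep x j

/-- The law of the couplings: independent Gaussians, `j_b` of mean `x_b` and variance 1. -/
def couplings {ι : Type*} [Fintype ι] (x : ι → ℝ) : Measure (ι → ℝ) :=
  Measure.pi fun b => gaussianReal (x b) 1

/-- The quenched average `[F]`. -/
def quenched {ι : Type*} [Fintype ι] (x : ι → ℝ) (F : (ι → ℝ) → ℝ) : ℝ :=
  ∫ j, F j ∂(couplings x)

/-- The quenched pressure `P({x}) = [ln Z]`. -/
def pressure {V ι : Type*} [Fintype V] [DecidableEq V] [Fintype ι]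
    (ep : ι → V × V) (x : ι → ℝ) : ℝ :=
  quenched x fun j => Real.log (partitionFn ep x j)

lemma spin_beq (s t : Bool) : spin (s == t) = spin s * spin t := by
  cases s <;> cases t <;> simp [spin]

lemma bondSpin_sq {V ι : Type*} (ep : ι → V × V) (S : V → Bool) (b : ι) :
    bondSpin ep S b * bondSpin ep S b = 1 := by
  unfold bondSpin spin
  split_ifs <;> norm_num

lemma bondSpin_abs {V ι : Type*} (ep : ι → V × V) (S : V → Bool) (b : ι) :
    |bondSpin ep S b| = 1 := by
  unfold bondSpin spin
  split_ifs <;> norm_num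

/-- Gauge transformation of the spins. -/
def gaugeEquiv {V : Type*} (T : V → Bool) : (V → Bool) ≃ (V → Bool) where
  toFun S := fun v => S v == T v
  invFun S := fun v => S v == T v
  left_inv S := by funext v; dsimp only; cases S v <;> cases T v <;> rfl
  right_inv S := by funext v; dsimp only; cases S v <;> cases T v <;> rfl

lemma bondSpin_gauge {V ι : Type*} (ep : ι → V × V) (T S : V → Bool) (b : ι) :
    bondSpin ep (gaugeEquiv T S) b = bondSpin ep S b * bondSpin ep T b := by
  simp only [bondSpin, gaugeEquiv, Equiv.coe_fn_mk, spin_beq]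
  ring

lemma potential_gauge {V ι : Type*} [Fintype ι] (ep : ι → V × V) (x j : ι → ℝ)
    (T S : V → Bool) :
    potential ep x (fun b => bondSpin ep T b * j b) S = potential ep x j (gaugeEquiv T S) := by
  unfold potential
  refine Finset.sum_congr rfl fun b _ => ?_
  rw [bondSpin_gauge]; ring

section
variable {V ι : Type*} [Fintype V] [DecidableEq V] [Fintype ι]

lemma partitionFn_pos (ep : ι → V × V) (x j : ι → ℝ) : 0 < partitionFn ep x j := by
  unfold partitionFn
  exact Finset.sum_pos (fun _ _ => Real.exp_pos _) Finset.univ_nonempty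

lemma partitionFn_gauge (ep : ι → V × V) (x j : ι → ℝ) (T : V → Bool) :
    partitionFn ep x (fun b => bondSpin ep T b * j b) = partitionFn ep x j := by
  unfold partitionFn
  simp_rw [potential_gauge]
  exact Equiv.sum_comp (gaugeEquiv T) (fun S => Real.exp (potential ep x j S))

lemma gibbs_gauge (ep : ι → V × V) (x j : ι → ℝ) (T : V → Bool) (b : ι) :
    gibbs ep x (fun b => bondSpin ep T b * j b) (fun S => bondSpin ep S b)
      = bondSpin ep T b * gibbs ep x j (fun S => bondSpin ep S b) := by
  unfold gibbs
  rw [partitionFn_gauge, ← mul_div_assoc]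
  congr 1
  rw [Finset.mul_sum, ← Equiv.sum_comp (gaugeEquiv T)
    (fun S => bondSpin ep T b * (bondSpin ep S b * Real.exp (potential ep x j S)))]
  refine Finset.sum_congr rfl fun S _ => ?_
  rw [potential_gauge, bondSpin_gauge]
  linear_combination (-bondSpin ep S b * Real.exp (potential ep x j (gaugeEquiv T S))) *
    bondSpin_sq ep T b

lemma potential_cont (ep : ι → V × V) (x : ι → ℝ) (S : V → Bool) :
    Continuous fun j => potential ep x j S := by
  unfold potential; fun_prop

lemma partitionFn_cont (ep : ι → V × V) (x : ι → ℝ) :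
    Continuous fun j => partitionFn ep x j := by
  unfold partitionFn
  exact continuous_finset_sum _ fun S _ => Real.continuous_exp.comp (potential_cont ep x S)

lemma gibbs_cont (ep : ι → V × V) (x : ι → ℝ) (f : (V → Bool) → ℝ) :
    Continuous fun j => gibbs ep x j f := by
  unfold gibbs
  refine Continuous.div ?_ (partitionFn_cont ep x) fun j => (partitionFn_pos ep x j).ne'
  exact continuous_finset_sum _ fun S _ =>
    continuous_const.mul (Real.continuous_exp.comp (potential_cont ep x S))

lemma logZ_cont (ep : ι → V × V) (x : ι → ℝ) :
    Continuous fun j => Real.log (partitionFn ep x j) :=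
  (partitionFn_cont ep x).log fun j => (partitionFn_pos ep x j).ne'

lemma gibbs_abs_le (ep : ι → V × V) (x j : ι → ℝ) (b : ι) :
    |gibbs ep x j (fun S => bondSpin ep S b)| ≤ 1 := by
  unfold gibbs
  rw [abs_div, abs_of_pos (partitionFn_pos ep x j), div_le_one (partitionFn_pos ep x j)]
  refine (Finset.abs_sum_le_sum_abs _ _).trans (Finset.sum_le_sum fun S _ => ?_)
  rw [abs_mul, bondSpin_abs, one_mul, abs_of_pos (Real.exp_pos _)]

lemma potential_abs_le (ep : ι → V × V) (x j : ι → ℝ) (S : V → Bool) :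
    |potential ep x j S| ≤ ∑ b, |x b| * |j b| := by
  unfold potential
  refine (Finset.abs_sum_le_sum_abs _ _).trans (Finset.sum_le_sum fun b _ => ?_)
  rw [abs_mul, bondSpin_abs, mul_one, abs_mul]

lemma logZ_abs_le (ep : ι → V × V) (x j : ι → ℝ) :
    |Real.log (partitionFn ep x j)| ≤
      Real.log (Fintype.card (V → Bool)) + ∑ b, |x b| * |j b| := by
  have hc : (1 : ℝ) ≤ Fintype.card (V → Bool) := by
    exact_mod_cast Fintype.card_pos
  have hc0 : (0 : ℝ) < Fintype.card (V → Bool) := by linarith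
  have hl := Real.log_nonneg hc
  have hp := partitionFn_pos ep x j
  rw [abs_le]
  constructor
  · have : Real.exp (-∑ b, |x b| * |j b|) ≤ partitionFn ep x j := by
      refine le_trans (Real.exp_le_exp.2 ?_) (Finset.single_le_sum
        (f := fun S => Real.exp (potential ep x j S)) (fun _ _ => (Real.exp_pos _).le)
        (Finset.mem_univ (fun _ => true)))
      exact (abs_le.1 (potential_abs_le ep x j _)).1
    have := (Real.le_log_iff_exp_le hp).2 this
    linarith
  · rw [Real.log_le_iff_le_exp hp, Real.exp_add, Real.exp_log hc0]
    unfold partitionFn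
    refine (Finset.sum_le_card_nsmul _ _ (Real.exp (∑ b, |x b| * |j b|)) fun S _ =>
      Real.exp_le_exp.2 (abs_le.1 (potential_abs_le ep x j S)).2).trans ?_
    simp [nsmul_eq_mul]

/-- Jensen (Gibbs–Bogoliubov) inequality. -/
lemma jensen_logZ (ep : ι → V × V) (x j y k : ι → ℝ) (W : (V → Bool) → ℝ)
    (h : ∀ S, potential ep y k S = potential ep x j S + W S) :
    Real.log (partitionFn ep x j) + gibbs ep x j W ≤ Real.log (partitionFn ep y k) := by
  have hp := partitionFn_pos ep x j
  rw [Real.le_log_iff_exp_le (partitionFn_pos ep y k), Real.exp_add, Real.exp_log hp]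
  set m := gibbs ep x j W with hm
  have hmZ : ∑ S : V → Bool, W S * Real.exp (potential ep x j S) = m * partitionFn ep x j := by
    rw [hm, gibbs, div_mul_cancel₀ _ hp.ne']
  have key : ∀ S : V → Bool, Real.exp (potential ep x j S) * Real.exp m * (1 + W S - m)
      ≤ Real.exp (potential ep y k S) := by
    intro S
    rw [h, show potential ep x j S + W S = potential ep x j S + m + (W S - m) by ring,
      Real.exp_add _ (W S - m), Real.exp_add]
    have := Real.add_one_le_exp (W S - m)
    gcongr
    linarith
  have hs := Finset.sum_le_sum fun S (_ : S ∈ (Finset.univ : Finset (V → Bool))) => key S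
  have e : ∑ S : V → Bool, Real.exp (potential ep x j S) * Real.exp m * (1 + W S - m)
      = partitionFn ep x j * Real.exp m := by
    have : ∀ S : V → Bool, Real.exp (potential ep x j S) * Real.exp m * (1 + W S - m)
      = (Real.exp m * (1 - m)) * Real.exp (potential ep x j S)
        + Real.exp m * (W S * Real.exp (potential ep x j S)) := fun S => by ring
    simp_rw [this]
    rw [Finset.sum_add_distrib, ← Finset.mul_sum, ← Finset.mul_sum, hmZ, partitionFn]
    ring
  rw [e] at hs
  exact hs

lemma gibbs_sum (ep : ι → V × V) (x j c : ι → ℝ) :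
    gibbs ep x j (fun S => ∑ b, c b * bondSpin ep S b)
      = ∑ b, c b * gibbs ep x j (fun S => bondSpin ep S b) := by
  unfold gibbs
  simp_rw [← mul_div_assoc, ← Finset.sum_div, Finset.sum_mul, Finset.mul_sum]
  rw [Finset.sum_comm]
  simp_rw [mul_assoc]

end

section
variable {ι : Type*} [Fintype ι]

instance couplings_prob (x : ι → ℝ) : IsProbabilityMeasure (couplings x) := by
  unfold couplings; infer_instance

lemma mp_shift (x : ι → ℝ) :
    MeasurePreserving (fun g : ι → ℝ => fun b => g b + x b) (couplings 0) (couplings x) := by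
  unfold couplings
  refine measurePreserving_pi (fun b => gaussianReal ((0 : ι → ℝ) b) 1)
    (fun b => gaussianReal (x b) 1) (f := fun b t => t + x b) fun b => ⟨by fun_prop, ?_⟩
  rw [gaussianReal_map_add_const]; simp

lemma mp_flip (s : ι → ℝ) (hs : ∀ b, s b * s b = 1) :
    MeasurePreserving (fun g : ι → ℝ => fun b => s b * g b) (couplings 0) (couplings 0) := by
  unfold couplings
  refine measurePreserving_pi (fun b => gaussianReal ((0 : ι → ℝ) b) 1)
    (fun b => gaussianReal ((0 : ι → ℝ) b) 1) (f := fun b t => s b * t)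
    fun b => ⟨by fun_prop, ?_⟩
  rw [gaussianReal_map_const_mul]
  congr 1
  · simp
  · ext; simp [pow_two, hs]

lemma integrable_coord (x : ι → ℝ) (b : ι) : Integrable (fun j : ι → ℝ => j b) (couplings x) := by
  unfold couplings
  exact integrable_comp_eval (μ := fun b => gaussianReal (x b) 1) (i := b) (f := fun t => t)
    ((memLp_id_gaussianReal 1).integrable (by simp))

lemma pi_withDensity_aux (μ : ι → Measure ℝ) [∀ i, IsProbabilityMeasure (μ i)]
    (f : ι → ℝ → ENNReal) (hf : ∀ i, Measurable (f i))
    [∀ i, IsProbabilityMeasure ((μ i).withDensity (f i))] :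
    Measure.pi (fun i => (μ i).withDensity (f i))
      = (Measure.pi μ).withDensity (fun g => ∏ i, f i (g i)) := by
  symm
  refine (Measure.pi_eq fun s hs => ?_).symm
  rw [withDensity_apply _ (MeasurableSet.univ_pi hs), ← lintegral_indicator (MeasurableSet.univ_pi hs)]
  have h1 : ∀ g : ι → ℝ, (Set.univ.pi s).indicator (fun g => ∏ i, f i (g i)) g
      = ∏ i, (s i).indicator (f i) (g i) := by
    intro g
    by_cases hg : g ∈ Set.univ.pi s
    · rw [Set.indicator_of_mem hg]
      exact Finset.prod_congr rfl fun i _ => (Set.indicator_of_mem (hg i trivial) _).symm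
    · rw [Set.indicator_of_notMem hg]
      simp only [Set.mem_univ_pi, not_forall] at hg
      obtain ⟨i, hi⟩ := hg
      exact (Finset.prod_eq_zero (Finset.mem_univ i) (Set.indicator_of_notMem hi _)).symm
  simp_rw [h1]
  have hm : ∀ i, Measurable ((s i).indicator (f i)) := fun i => (hf i).indicator (hs i)
  rw [lintegral_prod_eq_prod_lintegral_of_indepFun Finset.univ
    (fun i (g : ι → ℝ) => (s i).indicator (f i) (g i))
    (iIndepFun_pi fun i => (hm i).aemeasurable) fun i => (hm i).comp (measurable_pi_apply i)]
  refine Finset.prod_congr rfl fun i _ => ?_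
  rw [withDensity_apply _ (hs i), ← lintegral_indicator (hs i),
    ← (measurePreserving_eval μ i).lintegral_comp (hm i)]

lemma gaussian_density (m : ℝ) : gaussianReal m 1 =
    (gaussianReal 0 1).withDensity (fun t => ENNReal.ofReal (Real.exp (m * t - m ^ 2 / 2))) := by
  rw [gaussianReal_of_var_ne_zero _ one_ne_zero, gaussianReal_of_var_ne_zero _ one_ne_zero,
    ← withDensity_mul _ (measurable_gaussianPDF _ _) (by fun_prop)]
  congr 1
  funext t
  simp only [gaussianPDF, Pi.mul_apply, gaussianPDFReal]
  rw [← ENNReal.ofReal_mul (by positivity), mul_assoc (Real.sqrt _)⁻¹, ← Real.exp_add]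
  congr 3
  simp; ring

lemma couplings_density (x : ι → ℝ) : couplings x =
    (couplings 0).withDensity (fun g => ENNReal.ofReal
      (Real.exp (∑ b, x b * g b) * Real.exp (-∑ b, x b ^ 2 / 2))) := by
  unfold couplings
  have : ∀ b, IsProbabilityMeasure ((gaussianReal 0 1).withDensity
      (fun t => ENNReal.ofReal (Real.exp (x b * t - x b ^ 2 / 2)))) := fun b => by
    rw [← gaussian_density]; infer_instance
  simp_rw [fun b => gaussian_density (x b)]
  rw [pi_withDensity_aux (fun _ => gaussianReal 0 1) _ (fun i => by fun_prop)]
  simp only [Pi.zero_apply]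
  congr 1
  funext g
  rw [← ENNReal.ofReal_prod_of_nonneg (fun _ _ => (Real.exp_pos _).le), ← Real.exp_sum,
    ← Real.exp_add, Finset.sum_sub_distrib, sub_eq_add_neg]

end

section
variable {V ι : Type*} [Fintype V] [DecidableEq V] [Fintype ι]

lemma integrable_logZ (ep : ι → V × V) (x : ι → ℝ) :
    Integrable (fun j => Real.log (partitionFn ep x j)) (couplings x) := by
  refine Integrable.mono' (g := fun j => Real.log (Fintype.card (V → Bool)) +
    ∑ b, |x b| * |j b|) ?_ (logZ_cont ep x).aestronglyMeasurable
    (Eventually.of_forall fun j => logZ_abs_le ep x j)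
  exact (integrable_const _).add (integrable_finset_sum _ fun b _ =>
    ((integrable_coord x b).abs).const_mul _)

lemma integrable_gibbs (ep : ι → V × V) (x y : ι → ℝ) (b : ι) :
    Integrable (fun j => gibbs ep x j (fun S => bondSpin ep S b)) (couplings y) :=
  Integrable.mono' (integrable_const (1 : ℝ)) (gibbs_cont ep x _).aestronglyMeasurable
    (Eventually.of_forall fun j => gibbs_abs_le ep x j b)

/-- Nishimori identity consequence: `[⟨S_b⟩] ≥ 0`. -/
lemma nishimori_nonneg (ep : ι → V × V) (x : ι → ℝ) (b : ι) :
    0 ≤ ∫ j, gibbs ep x j (fun S => bondSpin ep S b) ∂(couplings x) := by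
  set G : (ι → ℝ) → ℝ := fun j => gibbs ep x j (fun S => bondSpin ep S b) with hG
  set c : ℝ := Real.exp (-∑ b, x b ^ 2 / 2) with hc
  set H : (ι → ℝ) → ℝ := fun g => (Real.exp (∑ b, x b * g b) * c) * G g with hH
  have hmeas : Measurable fun g : ι → ℝ =>
      ENNReal.ofReal (Real.exp (∑ b, x b * g b) * c) := by fun_prop
  have hpos : ∀ g : ι → ℝ, 0 ≤ Real.exp (∑ b, x b * g b) * c := fun g => by positivity
  have hI : ∫ j, G j ∂(couplings x) = ∫ g, H g ∂(couplings 0) := by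
    rw [couplings_density, integral_withDensity_eq_integral_toReal_smul hmeas (by simp)]
    refine integral_congr_ae (Eventually.of_forall fun g => ?_)
    simp only [ENNReal.toReal_ofReal (hpos g), smul_eq_mul, hH, hG]
  have hint : Integrable H (couplings 0) := by
    have h := integrable_gibbs ep x x b
    rw [couplings_density, integrable_withDensity_iff_integrable_smul' hmeas (by simp)] at h
    refine h.congr (Eventually.of_forall fun g => ?_)
    simp only [← hc, ENNReal.toReal_ofReal (hpos g), smul_eq_mul, hH, hG]
  have hflip : ∀ T : V → Bool, MeasurePreserving
      (fun g : ι → ℝ => fun b => bondSpin ep T b * g b) (couplings 0) (couplings 0) :=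
    fun T => mp_flip _ (bondSpin_sq ep T)
  have hT : ∀ T : V → Bool, ∫ g, H (fun b => bondSpin ep T b * g b) ∂(couplings 0)
      = ∫ g, H g ∂(couplings 0) := by
    intro T
    conv_rhs => rw [← (hflip T).map_eq]
    rw [integral_map (hflip T).measurable.aemeasurable]
    rw [(hflip T).map_eq]; exact hint.aestronglyMeasurable
  have hTi : ∀ T : V → Bool, Integrable (fun g => H (fun b => bondSpin ep T b * g b))
      (couplings 0) := fun T => (hflip T).integrable_comp_of_integrable hint
  have hsum : ∑ _T : V → Bool, ∫ g, H g ∂(couplings (0 : ι → ℝ))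
      = ∫ g, c * partitionFn ep x g * (G g * G g) ∂(couplings 0) := by
    rw [← Finset.sum_congr rfl fun T _ => hT T, ← integral_finset_sum _ fun T _ => hTi T]
    refine integral_congr_ae (Eventually.of_forall fun g => ?_)
    have e1 : ∀ T : V → Bool, H (fun b => bondSpin ep T b * g b)
        = c * G g * (bondSpin ep T b * Real.exp (potential ep x g T)) := by
      intro T
      simp only [hH, hG, gibbs_gauge]
      have : ∑ b, x b * (bondSpin ep T b * g b) = potential ep x g T := by
        unfold potential
        exact Finset.sum_congr rfl fun _ _ => by ring
      rw [this]; ring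
    have e2 : ∑ T : V → Bool, bondSpin ep T b * Real.exp (potential ep x g T)
        = G g * partitionFn ep x g := by
      simp only [hG, gibbs]
      rw [div_mul_cancel₀ _ (partitionFn_pos ep x g).ne']
    simp only [e1]
    rw [← Finset.mul_sum, e2]; ring
  have hnn : 0 ≤ ∫ g, c * partitionFn ep x g * (G g * G g) ∂(couplings 0) :=
    integral_nonneg fun g => mul_nonneg
      (mul_nonneg (Real.exp_pos _).le (partitionFn_pos ep x g).le) (mul_self_nonneg _)
  rw [hI]
  rw [← hsum, Finset.sum_const, nsmul_eq_mul] at hnn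
  refine nonneg_of_mul_nonneg_right hnn ?_
  exact_mod_cast (Finset.card_pos.2 Finset.univ_nonempty)

lemma pressure_shift (ep : ι → V × V) (x : ι → ℝ) :
    pressure ep x = ∫ g, Real.log (partitionFn ep x (fun b => g b + x b)) ∂(couplings 0) := by
  unfold pressure quenched
  rw [← (mp_shift x).map_eq, integral_map (mp_shift x).measurable.aemeasurable
    (logZ_cont ep x).aestronglyMeasurable]

lemma gibbs_shift (ep : ι → V × V) (x : ι → ℝ) (b : ι) :
    ∫ j, gibbs ep x j (fun S => bondSpin ep S b) ∂(couplings x)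
      = ∫ g, gibbs ep x (fun b => g b + x b) (fun S => bondSpin ep S b) ∂(couplings 0) := by
  rw [← (mp_shift x).map_eq, integral_map (mp_shift x).measurable.aemeasurable
    (gibbs_cont ep x _).aestronglyMeasurable]

lemma gibbs_indep [DecidableEq ι] (ep : ι → V × V) (x j k : ι → ℝ)
    (h : ∀ b, x b * j b = x b * k b) (f : (V → Bool) → ℝ) :
    gibbs ep x j f = gibbs ep x k f := by
  simp only [gibbs, partitionFn, potential, h]

/-- The coupling of an absent bond decouples. -/
lemma zero_term [DecidableEq ι] (ep : ι → V × V) (x : ι → ℝ) (b : ι) (hb : x b = 0) :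
    ∫ g, g b * gibbs ep x (fun b => g b + x b) (fun S => bondSpin ep S b) ∂(couplings 0) = 0 := by
  set F : (ι → ℝ) → ℝ := fun g =>
    g b * gibbs ep x (fun b => g b + x b) (fun S => bondSpin ep S b) with hF
  have hFc : Continuous F :=
    (continuous_apply b).mul ((gibbs_cont ep x _).comp (by fun_prop))
  set s : ι → ℝ := fun a => if a = b then -1 else 1 with hs
  have hmp := mp_flip s (fun a => by simp only [hs]; split_ifs <;> norm_num)
  have h1 : ∫ g, F (fun a => s a * g a) ∂(couplings 0) = ∫ g, F g ∂(couplings 0) := by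
    conv_rhs => rw [← hmp.map_eq]
    rw [integral_map hmp.measurable.aemeasurable hFc.aestronglyMeasurable]
  have h2 : ∀ g, F (fun a => s a * g a) = - F g := by
    intro g
    simp only [hF]
    rw [gibbs_indep ep x (fun a => s a * g a + x a) (fun a => g a + x a)]
    · simp [hs]
    · intro a
      by_cases hab : a = b
      · subst hab; simp [hb]
      · simp [hs, hab]
  simp only [h2, integral_neg] at h1
  linarith

lemma pressure_le_add [DecidableEq ι] (ep : ι → V × V) (x d : ι → ℝ)
    (hxd : ∀ b, x b * d b = 0) :
    pressure ep x ≤ pressure ep (fun b => x b + d b) := by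
  set y : ι → ℝ := fun b => x b + d b with hy
  set G : ι → (ι → ℝ) → ℝ := fun b g =>
    gibbs ep x (fun b => g b + x b) (fun S => bondSpin ep S b) with hG
  have hGi : ∀ b, Integrable (G b) (couplings 0) := fun b =>
    (mp_shift x).integrable_comp_of_integrable (integrable_gibbs ep x x b)
  have hgGi : ∀ b, Integrable (fun g => g b * G b g) (couplings 0) := fun b =>
    (integrable_coord 0 b).mul_bdd (c := 1) (hGi b).aestronglyMeasurable
      (Eventually.of_forall fun g => gibbs_abs_le ep x _ b)
  have hterm : ∀ b, Integrable (fun g => d b * (g b + d b) * G b g) (couplings 0) := fun b => by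
    refine (((hgGi b).const_mul (d b)).add ((hGi b).const_mul (d b * d b))).congr
      (Eventually.of_forall fun g => ?_)
    simp only [Pi.add_apply]; ring
  have hLx := (mp_shift x).integrable_comp_of_integrable (integrable_logZ ep x)
  have hLy := (mp_shift y).integrable_comp_of_integrable (integrable_logZ ep y)
  have hpt : ∀ g : ι → ℝ, Real.log (partitionFn ep x (fun b => g b + x b))
      + ∑ b, d b * (g b + d b) * G b g ≤ Real.log (partitionFn ep y (fun b => g b + y b)) := by
    intro g
    have := jensen_logZ ep x (fun b => g b + x b) y (fun b => g b + y b)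
      (fun S => ∑ b, d b * (g b + d b) * bondSpin ep S b) ?_
    · rwa [gibbs_sum ep x _ (fun b => d b * (g b + d b))] at this
    · intro S
      unfold potential
      rw [← Finset.sum_add_distrib]
      refine Finset.sum_congr rfl fun b _ => ?_
      simp only [hy]
      linear_combination (2 * bondSpin ep S b) * hxd b
  have hmono := integral_mono (hLx.add (integrable_finset_sum _ fun b _ => hterm b)) hLy hpt
  have hsplit : ∫ g, (Real.log (partitionFn ep x (fun b => g b + x b))
      + ∑ b, d b * (g b + d b) * G b g) ∂(couplings 0) = pressure ep x
      + ∑ b, ∫ g, d b * (g b + d b) * G b g ∂(couplings 0) := by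
    rw [pressure_shift, ← integral_finset_sum _ fun b _ => hterm b]
    exact integral_add hLx (integrable_finset_sum _ fun b _ => hterm b)
  have hnn : ∀ b, 0 ≤ ∫ g, d b * (g b + d b) * G b g ∂(couplings 0) := by
    intro b
    by_cases hd : d b = 0
    · simp [hd]
    have hxb : x b = 0 := (mul_eq_zero.1 (hxd b)).resolve_right hd
    have e : ∫ g, d b * (g b + d b) * G b g ∂(couplings 0)
        = d b * ∫ g, g b * G b g ∂(couplings 0) + d b * d b * ∫ g, G b g ∂(couplings 0) := by
      rw [← integral_const_mul, ← integral_const_mul,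
        ← integral_add ((hgGi b).const_mul _) ((hGi b).const_mul _)]
      refine integral_congr_ae (Eventually.of_forall fun g => ?_)
      simp only []; ring
    rw [e, zero_term ep x b hxb, mul_zero, zero_add, ← gibbs_shift]
    exact mul_nonneg (mul_self_nonneg _) (nishimori_nonneg ep x b)
  have h0 := Finset.sum_nonneg fun b (_ : b ∈ Finset.univ) => hnn b
  rw [pressure_shift ep y]
  refine le_trans ?_ hmono
  refine le_trans ?_ hsplit.ge
  linarith

end

/-- Monotonicity of the quenched pressure in the bond set: if `B' ⊆ B`
are two bond sets on the same finite site set and all parameters equal `x > 0`, then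
`P_{B'} ≤ P_B` (the pressure with bond set `B''` being the one with `x_b = 0` off `B''`). -/
theorem pressure_monotone_in_bonds
    {V ι : Type*} [Fintype V] [DecidableEq V] [Fintype ι] [DecidableEq ι]
    (ep : ι → V × V) (hep : ∀ b, (ep b).1 ≠ (ep b).2)
    (B' B : Finset ι) (hBB : B' ⊆ B) (x : ℝ) (hx : 0 < x) :
    pressure ep (fun b => if b ∈ B' then x else 0) ≤
      pressure ep (fun b => if b ∈ B then x else 0) := by
  have h := pressure_le_add ep (fun b => if b ∈ B' then x else 0)
    (fun b => if b ∈ B \ B' then x else 0) (fun b => by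
      by_cases h : b ∈ B' <;> simp [h])
  refine h.trans (le_of_eq ?_)
  congr 1
  funext b
  by_cases h' : b ∈ B'
  · simp [h', hBB h']
  · simp [h']

end
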